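/- Fix a conic T ⊂ ℙ^m, an integer d ≥ 5 and a finite set E ⊂ ℙ^m ∖ T with #E ≤ d−1. Then: (i) dim⟨ν_d(E ∪ T)⟩ = dim⟨ν_d(T)⟩ + #E; (ii) for every closed subscheme U ⊆ T one has ⟨ν_d(U ∪ E)⟩ ∩ ⟨ν_d(T)⟩ = ⟨ν_d(U)⟩; (iii) for every O ∈ ⟨ν_d(T ∪ E)⟩ ∖ ⟨ν_d(E)⟩, the set ⟨{O} ∪ ν_d(E)⟩ ∩ ⟨ν_d(T)⟩ is a single point. -/

import Mathlib

open scoped LinearAlgebra.Projectivization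

noncomputable section

/-- The polynomial ring in `m+1` variables over `K`: homogeneous coordinate ring of `ℙ^m`. -/
abbrev PR (K : Type) [Field K] (m : ℕ) : Type := MvPolynomial (Fin (m+1)) K

/-- The space of degree-`d` forms in `m+1` variables. -/
abbrev Hd (K : Type) [Field K] (m d : ℕ) : Submodule K (PR K m) :=
  MvPolynomial.homogeneousSubmodule (Fin (m+1)) K d

/-- Projective `m`-space over `K`. -/
abbrev Pm (K : Type) [Field K] (m : ℕ) := ℙ K (Fin (m+1) → K)

/-- The target projective space `ℙ^n`, `n = C(m+d,m) - 1`, of the degree-`d` Veronese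
embedding, realized as the projectivization of the dual of the space of degree-`d` forms
(the space of degree-`d` symmetric tensors). -/
abbrev PN (K : Type) [Field K] (m d : ℕ) := ℙ K (Module.Dual K (Hd K m d))

variable {K : Type} [Field K] {m : ℕ}

/-- Hilbert function of `R/I` in degree `t`. -/
def hilbQ (I : Ideal (PR K m)) (t : ℕ) : ℕ :=
  Module.finrank K ((Hd K m t).map (Ideal.Quotient.mkₐ K I).toLinearMap)

/-- The degree (length) of the projective scheme defined by `I`: the eventual value of the
Hilbert function of `R/I`. -/
def idealDeg (I : Ideal (PR K m)) : ℕ := Filter.limsup (fun t => hilbQ I t) Filter.atTop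

/-- `h^1(𝓘_Z(d))` for the zero-dimensional scheme `Z` with (saturated) ideal `I`:
it equals `deg Z - dim (R/I)_d`. -/
def h1I (I : Ideal (PR K m)) (d : ℕ) : ℕ := idealDeg I - hilbQ I d

/-- An ideal is homogeneous. -/
def IsHomogI (I : Ideal (PR K m)) : Prop :=
  ∀ f ∈ I, ∀ n : ℕ, MvPolynomial.homogeneousComponent n f ∈ I

/-- An ideal is saturated with respect to the irrelevant maximal ideal. -/
def IsSatI (I : Ideal (PR K m)) : Prop :=
  ∀ f : PR K m, (∀ i, MvPolynomial.X i * f ∈ I) → f ∈ I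

/-- A closed subscheme of `ℙ^m`, given by its saturated homogeneous ideal. -/
structure PSub (K : Type) [Field K] (m : ℕ) where
  I : Ideal (PR K m)
  homog : IsHomogI I
  sat : IsSatI I

/-- A (closed sub)scheme is zero-dimensional iff the Hilbert function of `R/I` is bounded. -/
def IsZeroDimI (I : Ideal (PR K m)) : Prop := ∃ C, ∀ t, hilbQ I t ≤ C

/-- A polynomial vanishes at a projective point (every homogeneous component vanishes
at a representative). -/
def vanishesAt (f : PR K m) (a : Pm K m) : Prop :=
  ∀ n : ℕ, MvPolynomial.eval a.rep (MvPolynomial.homogeneousComponent n f) = 0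

/-- Zero locus of an ideal in `ℙ^m`. -/
def pzeroLocus (I : Ideal (PR K m)) : Set (Pm K m) := {a | ∀ f ∈ I, vanishesAt f a}

/-- The (saturated) homogeneous ideal of a set of points of `ℙ^m`. -/
def idealOfSet (S : Set (Pm K m)) : Ideal (PR K m) :=
  Ideal.span {f : PR K m | (∃ n, f.IsHomogeneous n) ∧ ∀ a ∈ S, MvPolynomial.eval a.rep f = 0}

/-- Saturation of a homogeneous ideal: the smallest saturated homogeneous ideal containing it. -/
def satIdeal (J : Ideal (PR K m)) : Ideal (PR K m) := sInf {J' | J ≤ J' ∧ IsHomogI J' ∧ IsSatI J'}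

/-- The scheme defined by the (saturated) ideal `I` is reduced. -/
def IsReducedI (I : Ideal (PR K m)) : Prop := I = idealOfSet (pzeroLocus I)

/-- Connected component of a zero-dimensional scheme at a point `a`: the largest subscheme
supported at `a`, i.e. the `a`-primary component. -/
def componentAt (I : Ideal (PR K m)) (a : Pm K m) : Ideal (PR K m) :=
  sInf {J | I ≤ J ∧ IsHomogI J ∧ IsSatI J ∧ pzeroLocus J ⊆ {a}}

/-- Residual scheme of `Z` with respect to the hypersurface `f = 0`: the colon ideal `(I_Z : f)`. -/
def resIdeal (I : Ideal (PR K m)) (f : PR K m) : Ideal (PR K m) :=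
  Submodule.colon I (Ideal.span {f})

/-- Degree of the scheme-theoretic intersection of the subschemes defined by `I` and `J`. -/
def interDeg (I J : Ideal (PR K m)) : ℕ := idealDeg (I ⊔ J)

/-- The degree-`d` Veronese image of a vector `v`: the evaluation-at-`v` functional on
degree-`d` forms. -/
def nu (d : ℕ) (v : Fin (m+1) → K) : Module.Dual K (Hd K m d) :=
  (MvPolynomial.aeval v).toLinearMap ∘ₗ (Hd K m d).subtype

/-- The linear span of the Veronese image `ν_d(S)` of a set `S` of points of `ℙ^m`. -/
def dualSpan (d : ℕ) (S : Set (Pm K m)) : Submodule K (Module.Dual K (Hd K m d)) :=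
  Submodule.span K ((fun a => nu d a.rep) '' S)

/-- The linear span `⟨ν_d(Z)⟩` of the Veronese image of the subscheme with ideal `I`:
the annihilator of the degree-`d` part of `I`. -/
def schemeSpanSub (I : Ideal (PR K m)) (d : ℕ) : Submodule K (Module.Dual K (Hd K m d)) where
  carrier := {φ | ∀ f : Hd K m d, (f : PR K m) ∈ I → φ f = 0}
  add_mem' := by
    intro a b ha hb f hf
    simp [LinearMap.add_apply, ha f hf, hb f hf]
  zero_mem' := by intro f hf; simp
  smul_mem' := by
    intro c a ha f hf
    simp [LinearMap.smul_apply, ha f hf]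

/-- `P ∈ ⟨ν_d(Z)⟩`, for `Z` the subscheme with ideal `I`. -/
def inSpanI (I : Ideal (PR K m)) (d : ℕ) (P : PN K m d) : Prop := P.rep ∈ schemeSpanSub I d

/-- `P ∈ ⟨ν_d(S)⟩` for a set `S` of points of `ℙ^m`. -/
def inSpanSet (d : ℕ) (S : Set (Pm K m)) (P : PN K m d) : Prop := P.rep ∈ dualSpan d S

/-- `L` is a linear subspace of `ℙ^m`. -/
def IsLinearSub (L : Set (Pm K m)) : Prop :=
  ∃ W : Submodule K (Fin (m+1) → K), L = {a | a.submodule ≤ W}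

/-- `L` is a line of `ℙ^m`. -/
def IsLine (L : Set (Pm K m)) : Prop :=
  ∃ W : Submodule K (Fin (m+1) → K), Module.finrank K W = 2 ∧ L = {a | a.submodule ≤ W}

/-- `L` is a plane of `ℙ^m`. -/
def IsPlane (L : Set (Pm K m)) : Prop :=
  ∃ W : Submodule K (Fin (m+1) → K), Module.finrank K W = 3 ∧ L = {a | a.submodule ≤ W}

/-- `J` is the (saturated homogeneous) ideal of a conic of `ℙ^m`: a degree-2 curve contained
in a plane (possibly reducible). -/
def IsConic (J : Ideal (PR K m)) : Prop :=
  ∃ (W : Submodule K (Fin (m+1) → K)) (q : PR K m),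
    Module.finrank K W = 3 ∧ q.IsHomogeneous 2 ∧
    q ∉ idealOfSet {a : Pm K m | a.submodule ≤ W} ∧
    J = satIdeal (idealOfSet {a : Pm K m | a.submodule ≤ W} ⊔ Ideal.span {q})

/-- The algebra of polynomial functions on a `K`-vector space. -/
def polyFunctions (K V : Type) [Field K] [AddCommGroup V] [Module K V] : Subalgebra K (V → K) :=
  Algebra.adjoin K {g : V → K | ∃ φ : V →ₗ[K] K, g = ⇑φ}

/-- Zariski closure of a subset of a projective space. -/
def zClosure {V : Type} [AddCommGroup V] [Module K V] (T : Set (ℙ K V)) : Set (ℙ K V) :=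
  {P | ∀ F ∈ polyFunctions K V, (∀ Q ∈ T, ∀ c : K, F (c • Q.rep) = 0) →
    ∀ c : K, F (c • P.rep) = 0}

/-- The Veronese variety `X_{m,d} = ν_d(ℙ^m)` as a subset of `PN K m d`. -/
def XSet (K : Type) [Field K] (m d : ℕ) : Set (PN K m d) :=
  {Q | ∃ a : Pm K m, Q.submodule = Submodule.span K {nu d a.rep}}

/-- The image `ν_d(S)` of a set of points of `ℙ^m`, as a subset of `PN K m d`. -/
def nuSet (d : ℕ) (S : Set (Pm K m)) : Set (PN K m d) :=
  {Q | ∃ a ∈ S, Q.submodule = Submodule.span K {nu d a.rep}}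

/-- The rank of a point `P` of `PN` with respect to a subset `Y ⊆ PN`. -/
def rankWrt {m d : ℕ} (Y : Set (PN K m d)) (P : PN K m d) : ℕ :=
  sInf {r | ∃ S : Finset (PN K m d), ↑S ⊆ Y ∧ S.card = r ∧
    P.rep ∈ Submodule.span K (Projectivization.rep '' (S : Set (PN K m d)))}

/-- The `s`-th secant variety of `Y ⊆ PN`: the Zariski closure of the union of the spans
of `s` points of `Y`. -/
def secantWrt {m d : ℕ} (Y : Set (PN K m d)) (s : ℕ) : Set (PN K m d) :=
  zClosure {Q | ∃ S : Finset (PN K m d), ↑S ⊆ Y ∧ S.card ≤ s ∧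
    Q.rep ∈ Submodule.span K (Projectivization.rep '' (S : Set (PN K m d)))}

/-- The border rank of `P` with respect to `Y ⊆ PN`. -/
def brankWrt {m d : ℕ} (Y : Set (PN K m d)) (P : PN K m d) : ℕ :=
  sInf {s | 0 < s ∧ P ∈ secantWrt Y s}

/-- Symmetric rank. -/
def srank {m : ℕ} (d : ℕ) (P : PN K m d) : ℕ := rankWrt (XSet K m d) P

/-- Border rank. -/
def brank {m : ℕ} (d : ℕ) (P : PN K m d) : ℕ := brankWrt (XSet K m d) P

/-- Cactus rank: minimal degree of a zero-dimensional closed subscheme `E ⊂ ℙ^m` with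
`P ∈ ⟨ν_d(E)⟩`. -/
def crank {m : ℕ} (d : ℕ) (P : PN K m d) : ℕ :=
  sInf {c | ∃ Z : PSub K m, IsZeroDimI Z.I ∧ idealDeg Z.I = c ∧ inSpanI Z.I d P}

/-- `σ_{s,r}(X_{m,d})`. -/
def sigmaSet (K : Type) [Field K] (m d s r : ℕ) : Set (PN K m d) :=
  {P | brank d P = s ∧ srank d P = r}

/-- A property `Φ` holds for a general `k`-tuple of points of the linear subspace of `ℙ^m`
determined by `W`. -/
def GenerallyOn (W : Submodule K (Fin (m+1) → K)) (k : ℕ)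
    (Φ : (Fin k → Pm K m) → Prop) : Prop :=
  ∃ w : Fin 3 → W, Submodule.span K (Set.range fun j => (w j : Fin (m+1) → K)) = W ∧
    ∃ F : MvPolynomial (Fin k × Fin 3) K, F ≠ 0 ∧
      ∀ c : Fin k → Fin 3 → K,
        MvPolynomial.eval (fun p => c p.1 p.2) F ≠ 0 →
        ∀ e : Fin k → Pm K m,
          (∀ i, (e i).submodule = Submodule.span K {∑ j, c i j • (w j : Fin (m+1) → K)}) → Φ e

end

/-!
Write `A`, `B` and `C` for the spans of `ν_d(T)`, `ν_d(E)` and `ν_d(U)`. Linear duality turns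
intersections of ideals into sums of spans, so `⟨ν_d(T ∪ E)⟩ = A ⊔ B`, and everything follows
once `ν_d(E)` is known to be linearly independent modulo `A`: then `A` and `B` are disjoint and
`dim B = #E`, the modular law gives `(C ⊔ B) ⊓ A = C` for `C ≤ A`, and the last claim says that
the projection from `B` of a point of `(A ⊔ B) ∖ B` to `A` is well defined.

Independence modulo `A` needs, for each `a ∈ E`, a degree-`d` form in the ideal of `T` vanishing
on `E ∖ {a}` but not at `a`. A conic is cut out by forms of degree at most `2`, one of which does
not vanish at `a`; multiplying it by `d - 2 ≥ #E - 1` suitable linear forms, or by one more if it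
is itself linear, kills the other points.
-/

section LinearAlgebra

variable {K V : Type*} [Field K] [AddCommGroup V] [Module K V] {A B C : Submodule K V}

theorem linearIndependent_of_exists_separating {ι : Type*} {φ : ι → Module.Dual K V}
    (h : ∀ i, ∃ v, (∀ j ≠ i, φ j v = 0) ∧ φ i v ≠ 0) : LinearIndependent K φ := by
  choose v hv hvi using h
  refine .of_pairwise_dual_eq_zero_one φ (fun i => (φ i (v i))⁻¹ • Module.Dual.eval K V (v i)) ?_ ?_
  · intro i j hij
    simp [hv i j hij.symm]
  · intro i
    simp [hvi i]

theorem rep_notMem_span_singleton_rep {a b : ℙ K V} (hab : a ≠ b) : a.rep ∉ K ∙ b.rep := by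
  rw [Submodule.mem_span_singleton, ← Projectivization.mk_eq_mk_iff' K _ _ a.rep_nonzero
    b.rep_nonzero, a.mk_rep, b.mk_rep]
  exact hab

theorem sup_inf_eq_left_of_disjoint (hAB : Disjoint A B) (hCA : C ≤ A) : (C ⊔ B) ⊓ A = C := by
  rw [sup_inf_assoc_of_le B hCA, hAB.symm.eq_bot, sup_bot_eq]

theorem existsUnique_rep_mem_span_singleton {v : V} (hv : v ≠ 0) :
    ∃! Q : ℙ K V, Q.rep ∈ K ∙ v := by
  refine ⟨Projectivization.mk K v hv, ?_, fun Q hQ => ?_⟩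
  · obtain ⟨c, hc⟩ := Projectivization.exists_smul_eq_mk_rep K v hv
    exact Submodule.mem_span_singleton.mpr ⟨c, hc⟩
  · rw [← Q.mk_rep, Projectivization.mk_eq_mk_iff']
    exact Submodule.mem_span_singleton.mp hQ

theorem existsUnique_rep_mem_span_singleton_sup_inf (hAB : Disjoint A B) {x : V}
    (hx : x ∈ A ⊔ B) (hxB : x ∉ B) : ∃! Q : ℙ K V, Q.rep ∈ (K ∙ x ⊔ B) ⊓ A := by
  obtain ⟨a, ha, b, hb, rfl⟩ := Submodule.mem_sup.mp hx
  have ha0 : a ≠ 0 := by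
    rintro rfl
    exact hxB (by rwa [zero_add])
  have hsup : K ∙ (a + b) ⊔ B = K ∙ a ⊔ B := by
    refine le_antisymm (sup_le ?_ le_sup_right) (sup_le ?_ le_sup_right) <;>
      rw [Submodule.span_singleton_le_iff_mem]
    · exact add_mem (Submodule.mem_sup_left (Submodule.mem_span_singleton_self a))
        (Submodule.mem_sup_right hb)
    · simpa only [add_sub_cancel_right] using sub_mem
        (Submodule.mem_sup_left (Submodule.mem_span_singleton_self (a + b)))
        (Submodule.mem_sup_right (S := K ∙ (a + b)) hb)
  rw [hsup, sup_inf_eq_left_of_disjoint hAB ((Submodule.span_singleton_le_iff_mem a A).mpr ha)]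
  exact existsUnique_rep_mem_span_singleton ha0

end LinearAlgebra

section LineRestriction

open MvPolynomial

variable {σ R : Type*} [CommSemiring R]

/-- The restriction of a polynomial to the parametrized line `t ↦ t • v`. Its `n`-th coefficient
is the value at `v` of the degree-`n` component, which makes vanishing of all components at a
projective point membership in the kernel of an algebra homomorphism. -/
noncomputable def lineRestriction (v : σ → R) : MvPolynomial σ R →ₐ[R] Polynomial R :=
  aeval fun i => Polynomial.C (v i) * Polynomial.X

theorem lineRestriction_monomial (v : σ → R) (s : σ →₀ ℕ) (c : R) :
    lineRestriction v (monomial s c) =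
      Polynomial.monomial s.degree (eval v (monomial s c)) := by
  simp only [lineRestriction, aeval_monomial, eval_monomial, mul_pow, Finsupp.prod,
    Finset.prod_mul_distrib, Finset.prod_pow_eq_pow_sum, ← Polynomial.C_mul_X_pow_eq_monomial,
    Finsupp.degree_apply, Polynomial.algebraMap_eq, map_mul, map_prod, map_pow, mul_assoc]

theorem coeff_lineRestriction (v : σ → R) (f : MvPolynomial σ R) (n : ℕ) :
    (lineRestriction v f).coeff n = eval v (homogeneousComponent n f) := by
  induction f using MvPolynomial.induction_on' with
  | monomial s c =>
    rw [lineRestriction_monomial, Polynomial.coeff_monomial,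
      homogeneousComponent_of_mem (isHomogeneous_monomial c rfl)]
    simp only [eq_comm (a := n)]
    split_ifs <;> simp only [map_zero]
  | add p q hp hq => simp only [map_add, Polynomial.coeff_add, hp, hq]

theorem lineRestriction_of_isHomogeneous (v : σ → R) {f : MvPolynomial σ R} {n : ℕ}
    (hf : f.IsHomogeneous n) :
    lineRestriction v f = Polynomial.monomial n (eval v f) := by
  ext k
  rw [coeff_lineRestriction, homogeneousComponent_of_mem hf, Polynomial.coeff_monomial]
  simp only [eq_comm (a := k)]
  split_ifs <;> simp only [map_zero]

end LineRestriction

section SeparatingForms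

open MvPolynomial

theorem exists_linearForm_vanishing_ne_zero {K ι : Type*} [Field K] [Finite ι]
    {W : Submodule K (ι → K)} {v : ι → K} (hv : v ∉ W) :
    ∃ L : MvPolynomial ι K, L.IsHomogeneous 1 ∧ (∀ w ∈ W, eval w L = 0) ∧ eval v L ≠ 0 := by
  classical
  have := Fintype.ofFinite ι
  obtain ⟨φ, hφv, hφW⟩ := Submodule.exists_le_ker_of_notMem hv
  let L := φ.toMvPolynomial (Pi.basisFun K ι) (Module.Basis.singleton Unit K) ()
  have eval_L (w : ι → K) : eval w L = φ w := by
    have h := φ.toMvPolynomial_eval_eq_apply (Pi.basisFun K ι)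
      (Module.Basis.singleton Unit K) () ((Pi.basisFun K ι).repr w)
    rw [LinearEquiv.symm_apply_apply, Module.Basis.singleton_repr] at h
    exact h
  refine ⟨L, φ.toMvPolynomial_isHomogeneous _ _ _, fun w hw => ?_, ?_⟩
  · exact (eval_L w).trans (hφW hw)
  · rwa [eval_L]

theorem exists_form_vanishing_on_finset_ne_zero {K ι : Type*} [Field K] [Finite ι]
    {a : ℙ K (ι → K)} {E : Finset (ℙ K (ι → K))} (ha : a ∉ E) {n : ℕ} (hn : E.card ≤ n) :
    ∃ g : MvPolynomial ι K, g.IsHomogeneous n ∧ (∀ b ∈ E, eval b.rep g = 0) ∧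
      eval a.rep g ≠ 0 := by
  classical
  induction E using Finset.induction_on generalizing n with
  | empty =>
    obtain ⟨L, hL, -, hLa⟩ := exists_linearForm_vanishing_ne_zero (W := ⊥) (v := a.rep)
      (by simpa using a.rep_nonzero)
    exact ⟨L ^ n, by simpa using hL.pow n, by simp, by simpa using pow_ne_zero n hLa⟩
  | insert b E hb ih =>
    rw [Finset.card_insert_of_notMem hb] at hn
    obtain ⟨n, rfl⟩ := Nat.exists_eq_succ_of_ne_zero (Nat.ne_zero_of_lt hn)
    obtain ⟨hab, haE⟩ := not_or.mp (Finset.mem_insert.not.mp ha)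
    obtain ⟨g, hg, hgE, hga⟩ := ih haE (Nat.le_of_succ_le_succ hn)
    obtain ⟨L, hL, hLb, hLa⟩ :=
      exists_linearForm_vanishing_ne_zero (rep_notMem_span_singleton_rep hab)
    refine ⟨g * L, hg.mul hL, fun c hc => ?_, by simpa using ⟨hga, hLa⟩⟩
    rcases Finset.mem_insert.mp hc with rfl | hc
    · simp [hLb _ (Submodule.mem_span_singleton_self _)]
    · simp [hgE c hc]

end SeparatingForms

section CutOut

open MvPolynomial

variable {K : Type} [Field K] {m : ℕ}

theorem mem_pzeroLocus_iff_le_ker {J : Ideal (PR K m)} {a : Pm K m} :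
    a ∈ pzeroLocus J ↔ J ≤ RingHom.ker (lineRestriction a.rep) := by
  simp only [SetLike.le_def, RingHom.mem_ker, Polynomial.ext_iff, coeff_lineRestriction,
    Polynomial.coeff_zero]
  rfl

theorem isHomogI_ker_lineRestriction (v : Fin (m + 1) → K) :
    IsHomogI (RingHom.ker (lineRestriction v)) := by
  intro f hf n
  rw [RingHom.mem_ker] at hf ⊢
  rw [lineRestriction_of_isHomogeneous v (homogeneousComponent_isHomogeneous n f),
    ← coeff_lineRestriction, hf, Polynomial.coeff_zero, map_zero]

theorem isSatI_ker_lineRestriction {v : Fin (m + 1) → K} (hv : v ≠ 0) :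
    IsSatI (RingHom.ker (lineRestriction v)) := by
  intro f hf
  obtain ⟨i, hi⟩ := Function.ne_iff.mp hv
  have hXf : lineRestriction v (X i) * lineRestriction v f = 0 := by
    rw [← map_mul]
    exact hf i
  refine (mul_eq_zero.mp hXf).resolve_left ?_
  simpa [lineRestriction] using hi

theorem le_satIdeal (J : Ideal (PR K m)) : J ≤ satIdeal J :=
  le_sInf fun _ h => h.1

theorem pzeroLocus_subset_pzeroLocus_satIdeal (J : Ideal (PR K m)) :
    pzeroLocus J ⊆ pzeroLocus (satIdeal J) := by
  intro a ha
  rw [mem_pzeroLocus_iff_le_ker] at ha ⊢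
  exact sInf_le ⟨ha, isHomogI_ker_lineRestriction _, isSatI_ker_lineRestriction a.rep_nonzero⟩

/-- The zero locus of `J` is cut out, set-theoretically, by forms in `J` of degree at most `e`:
every point off the locus is detected by such a form. -/
def IsCutOutByDegreeLE (J : Ideal (PR K m)) (e : ℕ) : Prop :=
  ∀ a ∉ pzeroLocus J, ∃ n ≤ e, ∃ f ∈ J, f.IsHomogeneous n ∧ eval a.rep f ≠ 0

namespace IsCutOutByDegreeLE

variable {I J : Ideal (PR K m)} {e e' : ℕ}

theorem mono (hJ : IsCutOutByDegreeLE J e) (he : e ≤ e') : IsCutOutByDegreeLE J e' :=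
  fun a ha =>
    let ⟨n, hn, hf⟩ := hJ a ha
    ⟨n, hn.trans he, hf⟩

theorem sup (hI : IsCutOutByDegreeLE I e) (hJ : IsCutOutByDegreeLE J e) :
    IsCutOutByDegreeLE (I ⊔ J) e := by
  intro a ha
  rw [mem_pzeroLocus_iff_le_ker, sup_le_iff, not_and_or, ← mem_pzeroLocus_iff_le_ker,
    ← mem_pzeroLocus_iff_le_ker] at ha
  rcases ha with ha | ha
  · obtain ⟨n, hn, f, hf, hfa⟩ := hI a ha
    exact ⟨n, hn, f, Ideal.mem_sup_left hf, hfa⟩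
  · obtain ⟨n, hn, f, hf, hfa⟩ := hJ a ha
    exact ⟨n, hn, f, Ideal.mem_sup_right hf, hfa⟩

theorem satIdeal (hJ : IsCutOutByDegreeLE J e) : IsCutOutByDegreeLE (satIdeal J) e := by
  intro a ha
  obtain ⟨n, hn, f, hf, hfa⟩ := hJ a (mt (@pzeroLocus_subset_pzeroLocus_satIdeal _ _ _ J a) ha)
  exact ⟨n, hn, f, le_satIdeal J hf, hfa⟩

end IsCutOutByDegreeLE

theorem isCutOutByDegreeLE_span_singleton {q : PR K m} {n : ℕ} (hq : q.IsHomogeneous n) :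
    IsCutOutByDegreeLE (Ideal.span {q}) n := by
  refine fun a ha => ⟨n, le_rfl, q, Ideal.mem_span_singleton_self q, hq, fun hqa => ha ?_⟩
  rw [mem_pzeroLocus_iff_le_ker, Ideal.span_singleton_le_iff_mem, RingHom.mem_ker,
    lineRestriction_of_isHomogeneous _ hq, hqa, map_zero]

theorem subset_pzeroLocus_idealOfSet (S : Set (Pm K m)) : S ⊆ pzeroLocus (idealOfSet S) := by
  intro a ha
  rw [mem_pzeroLocus_iff_le_ker, idealOfSet, Ideal.span_le]
  rintro f ⟨⟨n, hf⟩, hfS⟩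
  rw [SetLike.mem_coe, RingHom.mem_ker, lineRestriction_of_isHomogeneous _ hf, hfS a ha, map_zero]

theorem isCutOutByDegreeLE_idealOfSet_linear (W : Submodule K (Fin (m + 1) → K)) :
    IsCutOutByDegreeLE (idealOfSet {a : Pm K m | a.submodule ≤ W}) 1 := by
  have submodule_le_iff (b : Pm K m) : b.submodule ≤ W ↔ b.rep ∈ W := by
    rw [b.submodule_eq, Submodule.span_singleton_le_iff_mem]
  intro a ha
  have haW : a.rep ∉ W := fun h => ha (subset_pzeroLocus_idealOfSet _ ((submodule_le_iff a).mpr h))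
  obtain ⟨L, hL, hLW, hLa⟩ := exists_linearForm_vanishing_ne_zero haW
  refine ⟨1, le_rfl, L, Ideal.subset_span ⟨⟨1, hL⟩, fun b hb => ?_⟩, hL, hLa⟩
  exact hLW _ ((submodule_le_iff b).mp hb)

theorem IsConic.isCutOutByDegreeLE_two {J : Ideal (PR K m)} (hJ : IsConic J) :
    IsCutOutByDegreeLE J 2 := by
  obtain ⟨W, q, -, hq, -, rfl⟩ := hJ
  exact (((isCutOutByDegreeLE_idealOfSet_linear W).mono one_le_two).sup
    (isCutOutByDegreeLE_span_singleton hq)).satIdeal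

end CutOut

section VeroneseSpans

open MvPolynomial Module

variable {K : Type} [Field K] {m : ℕ}

instance finiteDimensional_Hd (d : ℕ) : FiniteDimensional K (Hd K m d) :=
  .of_fg (homogeneousSubmodule_fg _ _ d)

/-- The degree-`d` part `I_d` of an ideal `I`, as a space of degree-`d` forms. -/
noncomputable def degreePart (I : Ideal (PR K m)) (d : ℕ) : Submodule K (Hd K m d) :=
  (I.restrictScalars K).comap (Hd K m d).subtype

theorem schemeSpanSub_eq_dualAnnihilator (I : Ideal (PR K m)) (d : ℕ) :
    schemeSpanSub I d = (degreePart I d).dualAnnihilator := by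
  ext φ
  exact (Submodule.mem_dualAnnihilator (W := degreePart I d) φ).symm

theorem schemeSpanSub_anti {I J : Ideal (PR K m)} (h : I ≤ J) (d : ℕ) :
    schemeSpanSub J d ≤ schemeSpanSub I d :=
  fun _ hφ f hf => hφ f (h hf)

theorem hilbQ_eq_finrank_schemeSpanSub (I : Ideal (PR K m)) (d : ℕ) :
    hilbQ I d = finrank K (schemeSpanSub I d) := by
  let π : Hd K m d →ₗ[K] PR K m ⧸ I :=
    (Ideal.Quotient.mkₐ K I).toLinearMap ∘ₗ (Hd K m d).subtype
  have range_π : (Hd K m d).map (Ideal.Quotient.mkₐ K I).toLinearMap = LinearMap.range π := by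
    rw [LinearMap.range_comp, Submodule.range_subtype]
  have ker_π : LinearMap.ker π = degreePart I d := by
    ext f
    exact Ideal.Quotient.eq_zero_iff_mem
  have rank_nullity := π.finrank_range_add_finrank_ker
  have annihilator_dim := Subspace.finrank_add_finrank_dualAnnihilator_eq (degreePart I d)
  rw [ker_π] at rank_nullity
  rw [hilbQ, range_π, schemeSpanSub_eq_dualAnnihilator]
  omega

theorem nu_apply (d : ℕ) (v : Fin (m + 1) → K) (f : Hd K m d) : nu d v f = eval v (f : PR K m) :=
  rfl

theorem mem_idealOfSet_iff {S : Set (Pm K m)} {d : ℕ} (f : Hd K m d) :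
    (f : PR K m) ∈ idealOfSet S ↔ ∀ a ∈ S, eval a.rep (f : PR K m) = 0 := by
  refine ⟨fun hf a ha => ?_, fun hf => Ideal.subset_span ⟨⟨d, f.2⟩, hf⟩⟩
  have hle : idealOfSet S ≤ RingHom.ker (eval a.rep) := Ideal.span_le.mpr fun g hg => hg.2 a ha
  exact hle hf

theorem schemeSpanSub_idealOfSet (S : Set (Pm K m)) (d : ℕ) :
    schemeSpanSub (idealOfSet S) d = dualSpan d S := by
  have h : degreePart (idealOfSet S) d = (dualSpan d S).dualCoannihilator := by
    ext f
    simp only [dualSpan, Submodule.coe_dualCoannihilator_span, ← SetLike.mem_coe,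
      Set.mem_ofPred_eq, Set.forall_mem_image, nu_apply]
    exact mem_idealOfSet_iff f
  rw [schemeSpanSub_eq_dualAnnihilator, h, Subspace.dualCoannihilator_dualAnnihilator_eq]

theorem schemeSpanSub_inf (I J : Ideal (PR K m)) (d : ℕ) :
    schemeSpanSub (I ⊓ J) d = schemeSpanSub I d ⊔ schemeSpanSub J d := by
  simp only [schemeSpanSub_eq_dualAnnihilator]
  exact Subspace.dualAnnihilator_inf_eq (degreePart I d) (degreePart J d)

theorem schemeSpanSub_inf_idealOfSet (I : Ideal (PR K m)) (S : Set (Pm K m)) (d : ℕ) :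
    schemeSpanSub (I ⊓ idealOfSet S) d = schemeSpanSub I d ⊔ dualSpan d S := by
  rw [schemeSpanSub_inf, schemeSpanSub_idealOfSet]

end VeroneseSpans

section Independence

open Module

variable {K : Type} [Field K] {m d e : ℕ} {J : Ideal (PR K m)} {E : Finset (Pm K m)}

theorem IsCutOutByDegreeLE.exists_mem_degreePart_separating (hJ : IsCutOutByDegreeLE J e)
    {a : Pm K m} (haJ : a ∉ pzeroLocus J) (haE : a ∉ E) (hE : E.card + e ≤ d) :
    ∃ g ∈ degreePart J d, (∀ b ∈ E, nu d b.rep g = 0) ∧ nu d a.rep g ≠ 0 := by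
  obtain ⟨n, hn, f, hfJ, hf, hfa⟩ := hJ a haJ
  obtain ⟨g, hg, hgE, hga⟩ :=
    exists_form_vanishing_on_finset_ne_zero haE (show E.card ≤ d - n by omega)
  have hfg : (f * g).IsHomogeneous d := by
    simpa only [show n + (d - n) = d by omega] using hf.mul hg
  refine ⟨⟨f * g, hfg⟩, J.mul_mem_right g hfJ, fun b hb => ?_, ?_⟩
  · rw [nu_apply, map_mul, hgE b hb, mul_zero]
  · rw [nu_apply, map_mul]
    exact mul_ne_zero hfa hga

theorem IsCutOutByDegreeLE.linearIndependent_dualRestrict_nu (hJ : IsCutOutByDegreeLE J e)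
    (hEJ : ∀ a ∈ E, a ∉ pzeroLocus J) (hE : E.card + e ≤ d + 1) :
    LinearIndependent K ((degreePart J d).dualRestrict ∘ fun a : E => nu d a.1.rep) := by
  classical
  refine linearIndependent_of_exists_separating (V := degreePart J d) fun a => ?_
  have hcard := Finset.card_erase_add_one a.2
  obtain ⟨g, hgJ, hgE, hga⟩ := hJ.exists_mem_degreePart_separating (d := d) (hEJ a a.2)
    (Finset.notMem_erase a.1 E) (by omega)
  refine ⟨⟨g, hgJ⟩, fun b hb => ?_, hga⟩
  exact hgE b (Finset.mem_erase.mpr ⟨Subtype.coe_ne_coe.mpr hb, b.2⟩)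

theorem dualSpan_coe_finset (d : ℕ) (E : Finset (Pm K m)) :
    dualSpan d (E : Set (Pm K m)) = Submodule.span K (Set.range fun a : E => nu d a.1.rep) := by
  rw [dualSpan, Set.image_eq_range]
  rfl

theorem IsCutOutByDegreeLE.disjoint_schemeSpanSub_dualSpan (hJ : IsCutOutByDegreeLE J e)
    (hEJ : ∀ a ∈ E, a ∉ pzeroLocus J) (hE : E.card + e ≤ d + 1) :
    Disjoint (schemeSpanSub J d) (dualSpan d (E : Set (Pm K m))) := by
  rw [schemeSpanSub_eq_dualAnnihilator, ← Submodule.dualRestrict_ker_eq_dualAnnihilator,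
    dualSpan_coe_finset]
  exact (Submodule.range_ker_disjoint (hJ.linearIndependent_dualRestrict_nu hEJ hE)).symm

theorem IsCutOutByDegreeLE.finrank_dualSpan (hJ : IsCutOutByDegreeLE J e)
    (hEJ : ∀ a ∈ E, a ∉ pzeroLocus J) (hE : E.card + e ≤ d + 1) :
    finrank K (dualSpan d (E : Set (Pm K m))) = E.card := by
  rw [dualSpan_coe_finset, finrank_span_eq_card
    (hJ.linearIndependent_dualRestrict_nu hEJ hE).of_comp, Fintype.card_coe]

end Independence

theorem stmt5_general {K : Type} [Field K] {m d e : ℕ} {J : Ideal (PR K m)}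
    (hJ : IsCutOutByDegreeLE J e) {E : Finset (Pm K m)} (hEJ : ∀ a ∈ E, a ∉ pzeroLocus J)
    (hE : E.card + e ≤ d + 1) :
    (hilbQ (J ⊓ idealOfSet (↑E : Set (Pm K m))) d = hilbQ J d + E.card) ∧
    (∀ I : Ideal (PR K m), J ≤ I →
      {P : PN K m d | inSpanI (I ⊓ idealOfSet (↑E : Set (Pm K m))) d P ∧ inSpanI J d P} =
        {P : PN K m d | inSpanI I d P}) ∧
    (∀ O : PN K m d, inSpanI (J ⊓ idealOfSet (↑E : Set (Pm K m))) d O →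
      ¬ inSpanSet d (↑E : Set (Pm K m)) O →
      ∃! Q : PN K m d,
        Q.rep ∈ Submodule.span K (insert O.rep ((fun a => nu d a.rep) '' (↑E : Set (Pm K m)))) ∧
          inSpanI J d Q) := by
  have hdisj := hJ.disjoint_schemeSpanSub_dualSpan hEJ hE
  simp only [inSpanI, schemeSpanSub_inf_idealOfSet]
  refine ⟨?_, fun I hJI => ?_, fun O hO hOE => ?_⟩
  · have hsum := Submodule.finrank_sup_add_finrank_inf_eq (schemeSpanSub J d)
      (dualSpan d (↑E : Set (Pm K m)))
    rwa [hdisj.eq_bot, finrank_bot, add_zero, hJ.finrank_dualSpan hEJ hE,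
      ← schemeSpanSub_inf_idealOfSet, ← hilbQ_eq_finrank_schemeSpanSub,
      ← hilbQ_eq_finrank_schemeSpanSub] at hsum
  · ext P
    rw [Set.mem_ofPred_eq, ← Submodule.mem_inf,
      sup_inf_eq_left_of_disjoint hdisj (schemeSpanSub_anti hJI d), Set.mem_ofPred_eq]
  · simp only [Submodule.span_insert, ← Submodule.mem_inf]
    exact existsUnique_rep_mem_span_singleton_sup_inf hdisj hO hOE

/-- Lemma 4 (`v3.0`): for a conic `T ⊂ ℙ^m`, `d ≥ 5` and a finite set `E ⊂ ℙ^m ∖ T` with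
`#E ≤ d-1`: (i) `dim⟨ν_d(E ∪ T)⟩ = dim⟨ν_d(T)⟩ + #E`; (ii) for every closed subscheme
`U ⊆ T`, `⟨ν_d(U ∪ E)⟩ ∩ ⟨ν_d(T)⟩ = ⟨ν_d(U)⟩`; (iii) for every
`O ∈ ⟨ν_d(T ∪ E)⟩ ∖ ⟨ν_d(E)⟩`, the set `⟨{O} ∪ ν_d(E)⟩ ∩ ⟨ν_d(T)⟩` is a single point. -/
theorem stmt5 (K : Type) [Field K] [IsAlgClosed K] [CharZero K]
    (m d : ℕ) (hd : 5 ≤ d) (T : PSub K m) (hT : IsConic T.I)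
    (E : Finset (Pm K m)) (hET : ∀ a ∈ E, a ∉ pzeroLocus T.I) (hE : E.card + 1 ≤ d) :
    (hilbQ (T.I ⊓ idealOfSet (↑E : Set (Pm K m))) d = hilbQ T.I d + E.card) ∧
    (∀ U : PSub K m, T.I ≤ U.I →
      {P : PN K m d | inSpanI (U.I ⊓ idealOfSet (↑E : Set (Pm K m))) d P ∧ inSpanI T.I d P} =
        {P : PN K m d | inSpanI U.I d P}) ∧
    (∀ O : PN K m d, inSpanI (T.I ⊓ idealOfSet (↑E : Set (Pm K m))) d O →
      ¬ inSpanSet d (↑E : Set (Pm K m)) O →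
      ∃! Q : PN K m d,
        Q.rep ∈ Submodule.span K (insert O.rep ((fun a => nu d a.rep) '' (↑E : Set (Pm K m)))) ∧
          inSpanI T.I d Q) := by
  obtain ⟨hdim, hspan, hproj⟩ :=
    stmt5_general hT.isCutOutByDegreeLE_two hET (show E.card + 2 ≤ d + 1 by omega)
  exact ⟨hdim, fun U => hspan U.I, hproj⟩
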